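/- For all real numbers q, z with 0 < q < 1 and z > 0, one has 2·S_even(q⁴, q+q⁻¹)·Σ_{ℓ∈ℤ} q^{(2ℓ+1)²} z^{2ℓ+1} = Π_{i≥1} (1 + q^{2i−1}z)(1 + q^{2i−1}z⁻¹) − Π_{i≥1} (1 − q^{2i−1}z)(1 − q^{2i−1}z⁻¹), where the sum over ℓ and the infinite products converge absolutely. (Note that 0 < q⁴ < 1 and q+q⁻¹ ≥ 1, so S_even(q⁴, q+q⁻¹) is defined.) -/

import Mathlib

/-!
Subtracting the Jacobi triple product
`(q²; q²)_∞ ∏_{i ≥ 1} (1 + q^(2i-1) z) (1 + q^(2i-1) z⁻¹) = ∑ₙ q^(n²) z^n`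
at `-z` from the one at `z` leaves twice the terms of odd index, so the claim amounts to
`S_even(q⁴, q + q⁻¹) = 1 / (q²; q²)_∞`.

For the latter, let `a_N` be the sum of `p^{∑ i ω_i} s^{#{i : ω_i ≥ 1}}` over the configurations on
`N` sites without two adjacent zeros and with positive last entry. Summing over the last entry gives
`(1 - p^N) a_N = s p^N (a_{N-1} + a_{N-2})`. At `p = x²` and `s = (1 + x)² / x`, that is
`p = q⁴` and `s = (q + q⁻¹)²` for `x = q²`, this is solved by
`a_N = (1 + x)^N x^(N(N+1)/2) / (x; x)_N`. Dividing `a_{2M}` by the weight of the ground state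
`0, 1, 0, 1, …` gives the contribution `1 / (x; x)_{2M}` of the sequences agreeing with the ground
state beyond site `2M`, and `M → ∞` exhausts `He`.

The triple product itself is the limit of MacMahon's finite form, whose induction step is the
`q`-Pascal rule.
-/

open scoped BigOperators

/-- `He` is the set of sequences `(ω_{-i})_{i ≥ 1}` of non-negative integers (indexed here by
`n : ℕ` with `i = n + 1`) with no two consecutive vanishing entries, agreeing for large `i`
with the sequence which is `1` at even `i` and `0` at odd `i`. -/
def He : Set (ℕ → ℕ) :=
  {ω | (∀ n : ℕ, ¬(ω n = 0 ∧ ω (n + 1) = 0)) ∧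
       (∃ N : ℕ, ∀ n ≥ N, ω n = if (n + 1) % 2 = 0 then 1 else 0)}

/-- `Ho` is as `He`, but agreeing for large `i` with the sequence which is `1` at odd `i`
and `0` at even `i`. -/
def Ho : Set (ℕ → ℕ) :=
  {ω | (∀ n : ℕ, ¬(ω n = 0 ∧ ω (n + 1) = 0)) ∧
       (∃ N : ℕ, ∀ n ≥ N, ω n = if (n + 1) % 2 = 1 then 1 else 0)}

/-- `A(ω) = Σ_{i odd} i·ω_{-i} + Σ_{i even} i·(ω_{-i} − 1)`. -/
noncomputable def Afun (ω : ℕ → ℕ) : ℤ :=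
  ∑ᶠ n : ℕ, (if (n + 1) % 2 = 1 then ((n : ℤ) + 1) * (ω n : ℤ)
             else ((n : ℤ) + 1) * ((ω n : ℤ) - 1))

/-- `B(ω) = 2·(Σ_{i odd} 1{ω_{-i} ≥ 1} − Σ_{i even} 1{ω_{-i} = 0})`. -/
noncomputable def Bfun (ω : ℕ → ℕ) : ℤ :=
  2 * ((∑ᶠ n : ℕ, if (n + 1) % 2 = 1 ∧ 1 ≤ ω n then (1 : ℤ) else 0)
     - (∑ᶠ n : ℕ, if (n + 1) % 2 = 0 ∧ ω n = 0 then (1 : ℤ) else 0))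

/-- `A'(ω) = Σ_{i even} i·ω_{-i} + Σ_{i odd} i·(ω_{-i} − 1)`. -/
noncomputable def A'fun (ω : ℕ → ℕ) : ℤ :=
  ∑ᶠ n : ℕ, (if (n + 1) % 2 = 0 then ((n : ℤ) + 1) * (ω n : ℤ)
             else ((n : ℤ) + 1) * ((ω n : ℤ) - 1))

/-- `B'(ω) = 2·(Σ_{i even} 1{ω_{-i} ≥ 1} − Σ_{i odd} 1{ω_{-i} = 0})`. -/
noncomputable def B'fun (ω : ℕ → ℕ) : ℤ :=
  2 * ((∑ᶠ n : ℕ, if (n + 1) % 2 = 0 ∧ 1 ≤ ω n then (1 : ℤ) else 0)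
     - (∑ᶠ n : ℕ, if (n + 1) % 2 = 1 ∧ ω n = 0 then (1 : ℤ) else 0))

/-- `S_even(q̃, t) = Σ_{ω ∈ H_e} q̃^{A(ω)} t^{B(ω)}`. -/
noncomputable def Seven (q t : ℝ) : ℝ := ∑' ω : He, q ^ Afun ω.1 * t ^ Bfun ω.1

/-- `S_odd(q̃, t) = Σ_{ω ∈ H_o} q̃^{A'(ω)} t^{B'(ω)}`. -/
noncomputable def Sodd (q t : ℝ) : ℝ := ∑' ω : Ho, q ^ A'fun ω.1 * t ^ B'fun ω.1

open Filter Topology Finset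

/-! ### The `q`-Pochhammer symbol -/

/-- The finite `q`-Pochhammer symbol `(x; x)_n = ∏_{i=1}^n (1 - x^i)`. -/
def qPochhammer {R : Type*} [CommRing R] (x : R) (n : ℕ) : R :=
  ∏ i ∈ range n, (1 - x ^ (i + 1))

/-- The infinite `q`-Pochhammer symbol `(x; x)_∞ = ∏_{i ≥ 1} (1 - x^i)`. -/
noncomputable def qPochhammerInf {R : Type*} [CommRing R] [TopologicalSpace R] (x : R) : R :=
  ∏' i : ℕ, (1 - x ^ (i + 1))

/-- The reciprocal `1 / (x; x)_k`, extended by zero to `k < 0` so that the recursion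
`qPochhammerInv_sub_one` holds for every integer `k`. -/
noncomputable def qPochhammerInv {𝕜 : Type*} [Field 𝕜] (x : 𝕜) (k : ℤ) : 𝕜 :=
  if 0 ≤ k then (qPochhammer x k.toNat)⁻¹ else 0

lemma qPochhammer_succ {R : Type*} [CommRing R] (x : R) (n : ℕ) :
    qPochhammer x (n + 1) = qPochhammer x n * (1 - x ^ (n + 1)) :=
  prod_range_succ _ _

lemma qPochhammerInv_natCast {𝕜 : Type*} [Field 𝕜] (x : 𝕜) (n : ℕ) :
    qPochhammerInv x n = (qPochhammer x n)⁻¹ := by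
  simp [qPochhammerInv]

lemma qPochhammerInv_of_neg {𝕜 : Type*} [Field 𝕜] (x : 𝕜) {k : ℤ} (hk : k < 0) :
    qPochhammerInv x k = 0 :=
  if_neg hk.not_ge

section NormedField

variable {𝕜 : Type*} [NormedField 𝕜] {x : 𝕜}

lemma one_sub_pow_succ_ne_zero (hx : ‖x‖ < 1) (n : ℕ) : 1 - x ^ (n + 1) ≠ 0 := by
  intro h
  have hlt : ‖x ^ (n + 1)‖ < 1 := by
    rw [norm_pow]
    exact pow_lt_one₀ (norm_nonneg x) hx n.succ_ne_zero
  rw [← sub_eq_zero.1 h, norm_one] at hlt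
  exact hlt.false

lemma qPochhammerInv_sub_one (hx : ‖x‖ < 1) (k : ℤ) :
    qPochhammerInv x (k - 1) = (1 - x ^ k) * qPochhammerInv x k := by
  rcases lt_trichotomy k 0 with hk | rfl | hk
  · rw [qPochhammerInv_of_neg x hk, qPochhammerInv_of_neg x (by lia), mul_zero]
  · rw [qPochhammerInv_of_neg x (by lia), zpow_zero, sub_self, zero_mul]
  · obtain ⟨n, rfl⟩ : ∃ n : ℕ, k = (n + 1 : ℕ) := ⟨(k - 1).toNat, by lia⟩
    rw [zpow_natCast, qPochhammerInv_natCast, qPochhammer_succ, mul_inv_rev,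
      mul_inv_cancel_left₀ (one_sub_pow_succ_ne_zero hx n), ← qPochhammerInv_natCast]
    congr 1
    lia

/-- The `q`-Pascal rule, from `1 - x^(k+l) = (1 - x^k) + x^k (1 - x^l)`. -/
lemma one_sub_zpow_add_mul_qPochhammerInv (hx0 : x ≠ 0) (hx : ‖x‖ < 1) (k l : ℤ) :
    (1 - x ^ (k + l)) * (qPochhammerInv x k * qPochhammerInv x l) =
      qPochhammerInv x (k - 1) * qPochhammerInv x l +
        x ^ k * (qPochhammerInv x k * qPochhammerInv x (l - 1)) := by
  rw [qPochhammerInv_sub_one hx, qPochhammerInv_sub_one hx, zpow_add₀ hx0]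
  ring

lemma summable_norm_pow_succ (hx : ‖x‖ < 1) : Summable fun i : ℕ => ‖-x ^ (i + 1)‖ := by
  simpa only [norm_neg, norm_pow] using
    (summable_nat_add_iff 1).2 (summable_geometric_of_lt_one (norm_nonneg x) hx)

variable [CompleteSpace 𝕜]

lemma multipliable_one_sub_pow_succ (hx : ‖x‖ < 1) :
    Multipliable fun i : ℕ => 1 - x ^ (i + 1) := by
  simpa only [← sub_eq_add_neg] using
    multipliable_one_add_of_summable (f := fun i : ℕ => -x ^ (i + 1)) (summable_norm_pow_succ hx)

lemma tendsto_qPochhammer (hx : ‖x‖ < 1) :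
    Tendsto (qPochhammer x) atTop (𝓝 (qPochhammerInf x)) :=
  (multipliable_one_sub_pow_succ hx).hasProd.tendsto_prod_nat

lemma qPochhammerInf_ne_zero (hx : ‖x‖ < 1) : qPochhammerInf x ≠ 0 := by
  simpa only [qPochhammerInf, sub_eq_add_neg] using
    tprod_one_add_ne_zero_of_summable (f := fun i : ℕ => -x ^ (i + 1))
      (fun i => by simpa only [← sub_eq_add_neg] using one_sub_pow_succ_ne_zero hx i)
      (summable_norm_pow_succ hx)

lemma tendsto_inv_qPochhammer (hx : ‖x‖ < 1) :
    Tendsto (fun n => (qPochhammer x n)⁻¹) atTop (𝓝 (qPochhammerInf x)⁻¹) :=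
  (tendsto_qPochhammer hx).inv₀ (qPochhammerInf_ne_zero hx)

lemma tendsto_qPochhammerInv (hx : ‖x‖ < 1) :
    Tendsto (qPochhammerInv x) atTop (𝓝 (qPochhammerInf x)⁻¹) := by
  have htoNat : Tendsto Int.toNat atTop atTop :=
    tendsto_atTop_atTop_of_monotone (fun _ _ => Int.toNat_le_toNat) fun n => ⟨n, by simp⟩
  refine ((tendsto_inv_qPochhammer hx).comp htoNat).congr' ?_
  filter_upwards [eventually_ge_atTop 0] with k hk
  rw [qPochhammerInv, if_pos hk, Function.comp_apply]

lemma exists_norm_qPochhammerInv_le (hx : ‖x‖ < 1) : ∃ C, ∀ k, ‖qPochhammerInv x k‖ ≤ C := by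
  obtain ⟨C, hC⟩ :=
    (Metric.isBounded_range_of_tendsto _ (tendsto_inv_qPochhammer hx)).exists_norm_le
  have hC' (n : ℕ) : ‖(qPochhammer x n)⁻¹‖ ≤ C := hC _ ⟨n, rfl⟩
  refine ⟨C, fun k => ?_⟩
  rw [qPochhammerInv]
  split_ifs
  · exact hC' _
  · simpa only [norm_zero] using (norm_nonneg _).trans (hC' 0)

end NormedField

lemma qPochhammerInf_ofReal {𝕜 : Type*} [RCLike 𝕜] {x : ℝ} (hx : ‖x‖ < 1) :
    qPochhammerInf (x : 𝕜) = (qPochhammerInf x : ℝ) := by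
  have h := (multipliable_one_sub_pow_succ hx).hasProd.map (algebraMap ℝ 𝕜)
    RCLike.continuous_ofReal
  simpa [qPochhammerInf, Function.comp_def] using h.tprod_eq

/-! ### The Jacobi triple product -/

/-- The general term `q^(n²) z^n` of the bilateral theta series. -/
def thetaTerm {𝕜 : Type*} [Field 𝕜] (q z : 𝕜) (n : ℤ) : 𝕜 := q ^ (n ^ 2) * z ^ n

/-- The general term of MacMahon's finite form of the Jacobi triple product
`∏_{i=1}^k (1 + q^(2i-1) z) ∏_{i=1}^l (1 + q^(2i-1) z⁻¹)`, divided by `(q²; q²)_{k+l}`. -/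
noncomputable def macMahonTerm {𝕜 : Type*} [Field 𝕜] (q z : 𝕜) (k l : ℕ) (n : ℤ) : 𝕜 :=
  thetaTerm q z n * (qPochhammerInv (q ^ 2) (k - n) * qPochhammerInv (q ^ 2) (l + n))

lemma injective_two_mul_add_one : Function.Injective fun l : ℤ => 2 * l + 1 :=
  fun _ _ h => by simpa using h

section Field

variable {𝕜 : Type*} [Field 𝕜] {q z : 𝕜}

lemma thetaTerm_inv_neg (q z : 𝕜) (n : ℤ) : thetaTerm q z⁻¹ (-n) = thetaTerm q z n := by
  rw [thetaTerm, thetaTerm, neg_sq, zpow_neg, inv_zpow, inv_inv]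

lemma thetaTerm_eq_mul_thetaTerm_sub_one (hq : q ≠ 0) (hz : z ≠ 0) (n : ℤ) :
    thetaTerm q z n = q ^ (2 * n - 1) * z * thetaTerm q z (n - 1) := by
  have hsq : n ^ 2 = 2 * n - 1 + (n - 1) ^ 2 := by ring
  rw [thetaTerm, thetaTerm, hsq, zpow_add₀ hq, zpow_sub_one₀ hz]
  field_simp

lemma tripleProduct_neg (q z : 𝕜) (i : ℕ) :
    (1 + q ^ (2 * i + 1) * -z) * (1 + q ^ (2 * i + 1) * (-z)⁻¹) =
      (1 - q ^ (2 * i + 1) * z) * (1 - q ^ (2 * i + 1) * z⁻¹) := by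
  rw [inv_neg, mul_neg, mul_neg, ← sub_eq_add_neg, ← sub_eq_add_neg]

lemma thetaTerm_sub_thetaTerm_neg_of_even (q z : 𝕜) {n : ℤ} (hn : Even n) :
    thetaTerm q z n - thetaTerm q (-z) n = 0 := by
  rw [thetaTerm, thetaTerm, hn.neg_zpow, sub_self]

lemma thetaTerm_sub_thetaTerm_neg_of_odd (q z : 𝕜) {n : ℤ} (hn : Odd n) :
    thetaTerm q z n - thetaTerm q (-z) n = 2 * thetaTerm q z n := by
  rw [thetaTerm, thetaTerm, hn.neg_zpow]
  ring

lemma macMahonTerm_inv_neg (q z : 𝕜) (k l : ℕ) (n : ℤ) :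
    macMahonTerm q z⁻¹ l k (-n) = macMahonTerm q z k l n := by
  rw [macMahonTerm, macMahonTerm, thetaTerm_inv_neg, sub_neg_eq_add, ← sub_eq_add_neg,
    mul_comm (qPochhammerInv _ _)]

lemma macMahonTerm_zero_zero (q z : 𝕜) {n : ℤ} (hn : n ≠ 0) : macMahonTerm q z 0 0 n = 0 := by
  rw [macMahonTerm]
  rcases hn.lt_or_gt with h | h
  · rw [qPochhammerInv_of_neg (k := (0 : ℕ) + n) _ (by lia), mul_zero, mul_zero]
  · rw [qPochhammerInv_of_neg (k := (0 : ℕ) - n) _ (by lia), zero_mul, mul_zero]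

end Field

section NormedField

variable {𝕜 : Type*} [NormedField 𝕜] {q z : 𝕜}

lemma norm_sq_lt_one (hq : ‖q‖ < 1) : ‖q ^ 2‖ < 1 := by
  rw [norm_pow]
  exact pow_lt_one₀ (norm_nonneg q) hq two_ne_zero

lemma macMahonTerm_succ_left (hq0 : q ≠ 0) (hq : ‖q‖ < 1) (hz : z ≠ 0) (k l : ℕ) (n : ℤ) :
    (1 - (q ^ 2) ^ (k + l + 1)) * macMahonTerm q z (k + 1) l n =
      macMahonTerm q z k l n + q ^ (2 * k + 1) * z * macMahonTerm q z k l (n - 1) := by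
  have pascal := one_sub_zpow_add_mul_qPochhammerInv (pow_ne_zero 2 hq0) (norm_sq_lt_one hq)
    (k + 1 - n) (l + n)
  have hexp : (q ^ 2) ^ ((k : ℤ) + 1 - n + (l + n)) = (q ^ 2) ^ (k + l + 1) := by
    rw [show (k : ℤ) + 1 - n + (l + n) = (k + l + 1 : ℕ) by push_cast; ring, zpow_natCast]
  have hshift : (q ^ 2) ^ ((k : ℤ) + 1 - n) * q ^ (2 * n - 1) = q ^ (2 * k + 1) := by
    rw [← zpow_natCast, ← zpow_natCast, ← zpow_mul, ← zpow_add₀ hq0]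
    congr 1
    push_cast
    ring
  have hk : (k : ℤ) + 1 - n - 1 = k - n := by ring
  have hk' : (k : ℤ) - (n - 1) = k + 1 - n := by ring
  have hl : (l : ℤ) + n - 1 = l + (n - 1) := by ring
  rw [hexp, hk, hl] at pascal
  simp only [macMahonTerm, Nat.cast_succ, hk']
  rw [mul_left_comm, pascal, mul_add, ← hshift]
  nth_rw 2 [thetaTerm_eq_mul_thetaTerm_sub_one hq0 hz]
  ring

lemma hasSum_macMahonTerm_succ_left (hq0 : q ≠ 0) (hq : ‖q‖ < 1) (hz : z ≠ 0) {k l : ℕ} {P : 𝕜}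
    (h : HasSum (macMahonTerm q z k l) (P / qPochhammer (q ^ 2) (k + l))) :
    HasSum (macMahonTerm q z (k + 1) l)
      ((1 + q ^ (2 * k + 1) * z) * P / qPochhammer (q ^ 2) (k + l + 1)) := by
  have hne := one_sub_pow_succ_ne_zero (norm_sq_lt_one hq) (k + l)
  have hshift := (Equiv.subRight (1 : ℤ)).hasSum_iff.2 h
  have hsum := (h.add (hshift.mul_left (q ^ (2 * k + 1) * z))).congr_fun
    (macMahonTerm_succ_left hq0 hq hz k l)
  convert! hsum.mul_left (1 - (q ^ 2) ^ (k + l + 1))⁻¹ using 1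
  · simp only [inv_mul_cancel_left₀ hne]
  · rw [qPochhammer_succ]
    field_simp

lemma hasSum_macMahonTerm_inv_iff (q z S : 𝕜) (k l : ℕ) :
    HasSum (macMahonTerm q z⁻¹ l k) S ↔ HasSum (macMahonTerm q z k l) S := by
  rw [← (Equiv.neg ℤ).hasSum_iff]
  exact iff_of_eq (congrArg (HasSum · S) (funext (macMahonTerm_inv_neg q z k l)))

lemma hasSum_macMahonTerm (hq0 : q ≠ 0) (hq : ‖q‖ < 1) (hz : z ≠ 0) (k l : ℕ) :
    HasSum (macMahonTerm q z k l)
      ((∏ i ∈ range k, (1 + q ^ (2 * i + 1) * z)) * (∏ i ∈ range l, (1 + q ^ (2 * i + 1) * z⁻¹)) /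
        qPochhammer (q ^ 2) (k + l)) := by
  induction k with
  | zero =>
    induction l with
    | zero =>
      simpa [macMahonTerm, thetaTerm, qPochhammerInv, qPochhammer] using
        hasSum_single (f := macMahonTerm q z 0 0) 0 fun _ => macMahonTerm_zero_zero q z
    | succ l ih =>
      rw [← hasSum_macMahonTerm_inv_iff, add_comm 0] at ih ⊢
      convert! hasSum_macMahonTerm_succ_left hq0 hq (inv_ne_zero hz) ih using 2
      rw [prod_range_succ]
      ring
  | succ k ih =>
    convert! hasSum_macMahonTerm_succ_left hq0 hq hz ih using 2
    · rw [prod_range_succ]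
      ring
    · rw [add_right_comm]

lemma summable_norm_pow_sq_mul_pow (hq0 : q ≠ 0) (hq : ‖q‖ < 1) (hz : z ≠ 0) :
    Summable fun n : ℕ => ‖q ^ n ^ 2 * z ^ n‖ := by
  have hne (n : ℕ) : ‖q ^ n ^ 2 * z ^ n‖ ≠ 0 :=
    norm_ne_zero_iff.2 (mul_ne_zero (pow_ne_zero _ hq0) (pow_ne_zero _ hz))
  have hratio (n : ℕ) : ‖q * z‖ * ‖q ^ 2‖ ^ n =
      ‖‖q ^ (n + 1) ^ 2 * z ^ (n + 1)‖‖ / ‖‖q ^ n ^ 2 * z ^ n‖‖ := by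
    rw [norm_norm, norm_norm, eq_div_iff (hne n)]
    simp only [norm_mul, norm_pow]
    ring
  have hlim : Tendsto (fun n : ℕ => ‖q * z‖ * ‖q ^ 2‖ ^ n) atTop (𝓝 0) := by
    simpa only [mul_zero] using (tendsto_pow_atTop_nhds_zero_of_lt_one (norm_nonneg _)
      (norm_sq_lt_one hq)).const_mul ‖q * z‖
  exact summable_of_ratio_test_tendsto_lt_one zero_lt_one (Eventually.of_forall hne)
    (hlim.congr hratio)

lemma summable_norm_thetaTerm (hq0 : q ≠ 0) (hq : ‖q‖ < 1) (hz : z ≠ 0) :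
    Summable fun n => ‖thetaTerm q z n‖ := by
  have hnat {w : 𝕜} (hw : w ≠ 0) : Summable fun n : ℕ => ‖thetaTerm q w n‖ :=
    (summable_norm_pow_sq_mul_pow hq0 hq hw).congr fun n => by
      rw [thetaTerm, zpow_natCast, ← Nat.cast_pow, zpow_natCast]
  refine Summable.of_nat_of_neg (hnat hz) ((hnat (inv_ne_zero hz)).congr fun n => ?_)
  rw [← thetaTerm_inv_neg, inv_inv]

variable [CompleteSpace 𝕜]

lemma multipliable_one_add_pow_mul (hq : ‖q‖ < 1) (z : 𝕜) :
    Multipliable fun i : ℕ => 1 + q ^ (2 * i + 1) * z := by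
  refine multipliable_one_add_of_summable ?_
  have hodd := (summable_geometric_of_lt_one (norm_nonneg q) hq).comp_injective
    (i := fun i : ℕ => 2 * i + 1) fun i j h => by simpa using h
  simpa only [norm_mul, norm_pow, Function.comp_apply] using hodd.mul_right ‖z‖

lemma multipliable_tripleProduct (hq : ‖q‖ < 1) (z : 𝕜) :
    Multipliable fun i : ℕ => (1 + q ^ (2 * i + 1) * z) * (1 + q ^ (2 * i + 1) * z⁻¹) :=
  (multipliable_one_add_pow_mul hq z).mul (multipliable_one_add_pow_mul hq z⁻¹)

lemma multipliable_tripleProduct_sub (hq : ‖q‖ < 1) (z : 𝕜) :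
    Multipliable fun i : ℕ => (1 - q ^ (2 * i + 1) * z) * (1 - q ^ (2 * i + 1) * z⁻¹) :=
  (multipliable_tripleProduct hq (-z)).congr (tripleProduct_neg q z)

lemma tendsto_tsum_macMahonTerm (hq0 : q ≠ 0) (hq : ‖q‖ < 1) (hz : z ≠ 0) :
    Tendsto (fun M : ℕ => ∑' n, macMahonTerm q z M M n) atTop
      (𝓝 (∑' n, thetaTerm q z n * ((qPochhammerInf (q ^ 2))⁻¹ * (qPochhammerInf (q ^ 2))⁻¹))) := by
  obtain ⟨C, hC⟩ := exists_norm_qPochhammerInv_le (norm_sq_lt_one hq)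
  have hlim := tendsto_qPochhammerInv (norm_sq_lt_one hq)
  have hcast : Tendsto (Nat.cast : ℕ → ℤ) atTop atTop := tendsto_natCast_atTop_atTop
  refine tendsto_tsum_of_dominated_convergence
    (bound := fun n => ‖thetaTerm q z n‖ * (C * C))
    ((summable_norm_thetaTerm hq0 hq hz).mul_right _) (fun n => ?_)
    (Eventually.of_forall fun M n => ?_)
  · exact ((hlim.comp (tendsto_atTop_add_const_right _ (-n) hcast)).mul
      (hlim.comp (tendsto_atTop_add_const_right _ n hcast))).const_mul _
  · rw [macMahonTerm, norm_mul, norm_mul (qPochhammerInv _ _)]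
    have hC0 := (norm_nonneg _).trans (hC 0)
    gcongr <;> exact hC _

theorem jacobi_tripleProduct (hq0 : q ≠ 0) (hq : ‖q‖ < 1) (hz : z ≠ 0) :
    qPochhammerInf (q ^ 2) *
        ∏' i : ℕ, (1 + q ^ (2 * i + 1) * z) * (1 + q ^ (2 * i + 1) * z⁻¹) =
      ∑' n, thetaTerm q z n := by
  have hx := norm_sq_lt_one hq
  have hdouble : Tendsto (fun M : ℕ => M + M) atTop atTop :=
    tendsto_id.atTop_add_nonneg fun n => n.zero_le
  have hprod := (multipliable_tripleProduct hq z).hasProd.tendsto_prod_nat.mul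
    ((tendsto_inv_qPochhammer hx).comp hdouble)
  have hsum := (tendsto_tsum_macMahonTerm hq0 hq hz).congr fun M =>
    (hasSum_macMahonTerm hq0 hq hz M M).tsum_eq
  simp only [← prod_mul_distrib, div_eq_mul_inv] at hsum
  have hlim := tendsto_nhds_unique hprod hsum
  rw [tsum_mul_right, ← mul_assoc] at hlim
  rw [mul_right_cancel₀ (inv_ne_zero (qPochhammerInf_ne_zero hx)) hlim, mul_comm,
    inv_mul_cancel_right₀ (qPochhammerInf_ne_zero hx)]

lemma tsum_thetaTerm_sub_neg (hq0 : q ≠ 0) (hq : ‖q‖ < 1) (hz : z ≠ 0) :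
    ∑' n, thetaTerm q z n - ∑' n, thetaTerm q (-z) n = 2 * ∑' l : ℤ, thetaTerm q z (2 * l + 1) := by
  rw [← (summable_norm_thetaTerm hq0 hq hz).of_norm.tsum_sub
    (summable_norm_thetaTerm hq0 hq (neg_ne_zero.2 hz)).of_norm, ← tsum_mul_left,
    ← injective_two_mul_add_one.tsum_eq]
  · exact tsum_congr fun l => thetaTerm_sub_thetaTerm_neg_of_odd q z (odd_two_mul_add_one l)
  · intro n hn
    rcases Int.even_or_odd n with heven | ⟨l, hl⟩
    · exact absurd (thetaTerm_sub_thetaTerm_neg_of_even q z heven) hn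
    · exact ⟨l, hl.symm⟩

lemma qPochhammerInf_mul_tprod_sub_tprod (hq0 : q ≠ 0) (hq : ‖q‖ < 1) (hz : z ≠ 0) :
    qPochhammerInf (q ^ 2) *
        ((∏' i : ℕ, (1 + q ^ (2 * i + 1) * z) * (1 + q ^ (2 * i + 1) * z⁻¹)) -
          ∏' i : ℕ, (1 - q ^ (2 * i + 1) * z) * (1 - q ^ (2 * i + 1) * z⁻¹)) =
      2 * ∑' l : ℤ, thetaTerm q z (2 * l + 1) := by
  rw [← tsum_thetaTerm_sub_neg hq0 hq hz, mul_sub,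
    jacobi_tripleProduct hq0 hq hz, ← jacobi_tripleProduct hq0 hq (neg_ne_zero.2 hz),
    tprod_congr (tripleProduct_neg q z)]

end NormedField

/-! ### Configurations on finitely many sites -/

lemma zpow_sum₀ {ι G₀ : Type*} [CommGroupWithZero G₀] {a : G₀} (ha : a ≠ 0) (s : Finset ι)
    (f : ι → ℤ) : a ^ ∑ i ∈ s, f i = ∏ i ∈ s, a ^ f i := by
  induction s using Finset.cons_induction with
  | empty => rw [sum_empty, prod_empty, zpow_zero]
  | cons i s hi ih => rw [sum_cons, prod_cons, zpow_add₀ ha, ih]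

lemma hasSum_iUnion_of_monotone {ι κ : Type*} [Preorder κ] [IsDirectedOrder κ] [Nonempty κ]
    {f : ι → ℝ} (hf : ∀ i, 0 ≤ f i) {s : κ → Set ι} (hs : Monotone s) {a : κ → ℝ} {L : ℝ}
    (ha : ∀ k, HasSum (fun i : s k => f i) (a k)) (hL : Tendsto a atTop (𝓝 L)) :
    HasSum (fun i : ⋃ k, s k => f i) L := by
  have hnonneg (t : Set ι) (i : ι) : 0 ≤ t.indicator f i := Set.indicator_nonneg (fun i _ => hf i) i
  have ha' (k : κ) : HasSum ((s k).indicator f) (a k) := hasSum_subtype_iff_indicator.1 (ha k)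
  refine hasSum_subtype_iff_indicator.2
    (hasSum_of_isLUB_of_nonneg _ (hnonneg _) ⟨?_, fun c hc => ?_⟩)
  · rintro _ ⟨F, rfl⟩
    exact le_of_tendsto_of_tendsto'
      (tendsto_finsetSum F fun i _ => (hs.tendsto_indicator s f i).mono_right (pure_le_nhds _))
      hL fun k => sum_le_hasSum F (fun i _ => hnonneg _ i) (ha' k)
  · refine le_of_tendsto' hL fun k => hasSum_le_of_sum_le (ha' k) fun F => ?_
    exact (sum_le_sum fun i _ => Set.indicator_le_indicator_of_subset
      (Set.subset_iUnion s k) hf i).trans (hc ⟨F, rfl⟩)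

/-- The weight `p^{ik} s^{1{k ≥ 1}}` of the entry `k` at site `i = n + 1`. The sum defining
`Seven p t` has these weights for `s = t²`, up to normalization. -/
def siteWeight (p s : ℝ) (n k : ℕ) : ℝ :=
  p ^ ((n + 1) * k) * if k = 0 then 1 else s

/-- The weight of the first `N` entries of `ω`. -/
def configWeight (p s : ℝ) (N : ℕ) (ω : ℕ → ℕ) : ℝ :=
  ∏ n ∈ range N, siteWeight p s n (ω n)

/-- Configurations on the first `N` sites without two adjacent zeros, encoded as sequences
vanishing on the remaining sites. -/
def Config (N : ℕ) : Set (ℕ → ℕ) :=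
  {ω | (∀ n, n + 1 < N → ¬(ω n = 0 ∧ ω (n + 1) = 0)) ∧ ∀ n, N ≤ n → ω n = 0}

/-- Configurations on the first `N` sites whose last entry is positive (no condition if
`N = 0`). -/
def PosConfig (N : ℕ) : Set (ℕ → ℕ) :=
  {ω | ω ∈ Config N ∧ ∀ n, n + 1 = N → ω n ≠ 0}

lemma config_zero : Config 0 = {0} := by
  ext ω
  simp [Config, funext_iff]

lemma posConfig_zero : PosConfig 0 = {0} := by
  ext ω
  simp [PosConfig, config_zero]

lemma config_succ (N : ℕ) : Config (N + 1) = PosConfig (N + 1) ∪ PosConfig N := by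
  ext ω
  constructor
  · intro hω
    by_cases hN : ω N = 0
    · refine Or.inr ⟨⟨fun n hn => hω.1 n (by lia), fun n hn => ?_⟩, ?_⟩
      · rcases hn.eq_or_lt with rfl | hn
        exacts [hN, hω.2 n hn]
      · rintro n rfl hn
        exact hω.1 n n.succ.lt_succ_self ⟨hn, hN⟩
    · refine Or.inl ⟨hω, fun n hn => ?_⟩
      rwa [Nat.succ_injective hn]
  · rintro (hω | ⟨⟨hadj, hzero⟩, hlast⟩)
    · exact hω.1
    · refine ⟨fun n hn hn0 => ?_, fun n hn => hzero n (by lia)⟩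
      rcases (Nat.le_of_lt_succ hn).eq_or_lt with hN | hN
      exacts [hlast n hN hn0.1, hadj n hN hn0]

lemma disjoint_posConfig_succ (N : ℕ) : Disjoint (PosConfig (N + 1)) (PosConfig N) :=
  Set.disjoint_left.2 fun _ hω hω' => hω.2 N rfl (hω'.1.2 N le_rfl)

/-- Appending a positive entry at the new site `N + 1`. -/
def appendEquiv (N : ℕ) : Config N × ℕ ≃ PosConfig (N + 1) where
  toFun c := ⟨Function.update c.1.1 N (c.2 + 1), by
    obtain ⟨⟨ω, hadj, hzero⟩, k⟩ := c
    refine ⟨⟨fun n => ?_, fun n => ?_⟩, fun n => ?_⟩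
    · have := hadj n
      grind
    · have := hzero n
      grind
    · grind⟩
  invFun ω := (⟨Function.update ω.1 N 0, by
    obtain ⟨ω, ⟨hadj, hzero⟩, -⟩ := ω
    refine ⟨fun n => ?_, fun n => ?_⟩
    · have := hadj n
      grind
    · have := hzero n
      grind⟩, ω.1 N - 1)
  left_inv := by
    rintro ⟨⟨ω, -, hzero⟩, k⟩
    have := hzero N le_rfl
    ext n <;> grind
  right_inv := by
    rintro ⟨ω, -, hlast⟩
    have := hlast N rfl
    ext n
    grind

lemma configWeight_appendEquiv (p s : ℝ) (N : ℕ) (c : Config N × ℕ) :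
    configWeight p s (N + 1) (appendEquiv N c) =
      configWeight p s N c.1 * siteWeight p s N (c.2 + 1) := by
  simp only [configWeight, appendEquiv, Equiv.coe_fn_mk, prod_range_succ, Function.update_self]
  refine congrArg (· * _) (prod_congr rfl fun n hn => ?_)
  rw [Function.update_of_ne (mem_range.1 hn).ne]

lemma configWeight_succ_of_mem_posConfig (p s : ℝ) {N : ℕ} {ω : ℕ → ℕ} (hω : ω ∈ PosConfig N) :
    configWeight p s (N + 1) ω = configWeight p s N ω := by
  rw [configWeight, prod_range_succ, hω.1.2 N le_rfl]
  simp only [siteWeight, mul_zero, pow_zero, if_true, mul_one, configWeight]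

section TransferRecursion

variable {p s : ℝ}

lemma siteWeight_nonneg (hp : 0 ≤ p) (hs : 0 ≤ s) (n k : ℕ) : 0 ≤ siteWeight p s n k := by
  unfold siteWeight
  positivity

lemma configWeight_nonneg (hp : 0 ≤ p) (hs : 0 ≤ s) (N : ℕ) (ω : ℕ → ℕ) :
    0 ≤ configWeight p s N ω :=
  prod_nonneg fun _ _ => siteWeight_nonneg hp hs _ _

lemma hasSum_siteWeight_succ (hp : 0 ≤ p) (hp1 : p < 1) (s : ℝ) (n : ℕ) :
    HasSum (fun k => siteWeight p s n (k + 1)) (s * p ^ (n + 1) / (1 - p ^ (n + 1))) := by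
  have hgeom := hasSum_geometric_of_lt_one (pow_nonneg hp (n + 1))
    (pow_lt_one₀ hp hp1 n.succ_ne_zero)
  rw [div_eq_mul_inv]
  refine (hgeom.mul_left (s * p ^ (n + 1))).congr_fun fun k => ?_
  rw [siteWeight, if_neg k.succ_ne_zero, mul_add_one, pow_add, pow_mul]
  ring

lemma hasSum_posConfig_succ (hp : 0 ≤ p) (hp1 : p < 1) (hs : 0 ≤ s) {N : ℕ} {b : ℝ}
    (h : HasSum (fun ω : Config N => configWeight p s N ω) b) :
    HasSum (fun ω : PosConfig (N + 1) => configWeight p s (N + 1) ω)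
      (b * (s * p ^ (N + 1) / (1 - p ^ (N + 1)))) := by
  have hsite := hasSum_siteWeight_succ hp hp1 s N
  rw [← (appendEquiv N).hasSum_iff]
  exact (h.mul hsite (h.summable.mul_of_nonneg hsite.summable
    (fun _ => configWeight_nonneg hp hs _ _) fun _ => siteWeight_nonneg hp hs _ _)).congr_fun
      (configWeight_appendEquiv p s N)

lemma hasSum_config_succ {N : ℕ} {a a' : ℝ}
    (h' : HasSum (fun ω : PosConfig (N + 1) => configWeight p s (N + 1) ω) a')
    (h : HasSum (fun ω : PosConfig N => configWeight p s N ω) a) :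
    HasSum (fun ω : Config (N + 1) => configWeight p s (N + 1) ω) (a' + a) := by
  rw [config_succ]
  exact HasSum.add_disjoint (f := configWeight p s (N + 1)) (disjoint_posConfig_succ N) h'
    (h.congr_fun fun ω => configWeight_succ_of_mem_posConfig p s ω.2)

end TransferRecursion

/-! ### The transfer recursion at `s = (1 + x)² / x` -/

/-- The closed form of the partition function of `PosConfig N` at `p = x²` and
`s = (1 + x)² / x`. -/
noncomputable def posConfigSum (x : ℝ) (N : ℕ) : ℝ :=
  (∏ i ∈ range N, (1 + x) * x ^ (i + 1)) / qPochhammer x N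

lemma posConfigSum_succ (x : ℝ) (N : ℕ) :
    posConfigSum x (N + 1) =
      posConfigSum x N * ((1 + x) * x ^ (N + 1) / (1 - x ^ (N + 1))) := by
  rw [posConfigSum, posConfigSum, prod_range_succ, qPochhammer_succ, mul_div_mul_comm]

section Critical

variable {x s : ℝ}

/-- Eliminating the sums over `Config N`, the partition functions `a_N` of `PosConfig N` satisfy
`(1 - p^(N+1)) a_{N+1} = s p^(N+1) (a_N + a_{N-1})`; for `s = (1 + x)² / x` and `p = x²` one factor
`1 + x^(N+1)` cancels on both sides. -/
lemma hasSum_posConfig_and_config (hx0 : 0 < x) (hx1 : x < 1) (hs : x * s = (1 + x) ^ 2) (N : ℕ) :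
    HasSum (fun ω : PosConfig N => configWeight (x ^ 2) s N ω) (posConfigSum x N) ∧
      HasSum (fun ω : Config N => configWeight (x ^ 2) s N ω)
        (posConfigSum x N * (1 + x ^ (N + 1)) / ((1 + x) * x ^ N)) := by
  obtain rfl : s = (1 + x) ^ 2 / x := by rw [eq_div_iff hx0.ne', mul_comm, hs]
  have h1x : 1 + x ≠ 0 := by positivity
  induction N with
  | zero =>
    rw [posConfig_zero, config_zero]
    simp [configWeight, posConfigSum, qPochhammer, h1x]
  | succ N ih =>
    have hne : 1 - x ^ (N + 1) ≠ 0 := (sub_pos.2 (pow_lt_one₀ hx0.le hx1 N.succ_ne_zero)).ne'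
    have hne' : 1 + x ^ (N + 1) ≠ 0 := by positivity
    have hpos : HasSum (fun ω : PosConfig (N + 1) =>
        configWeight (x ^ 2) ((1 + x) ^ 2 / x) (N + 1) ω) (posConfigSum x (N + 1)) := by
      convert! hasSum_posConfig_succ (by positivity) (pow_lt_one₀ hx0.le hx1 two_ne_zero)
        (by positivity) ih.2 using 1
      have hfactor : 1 - (x ^ 2) ^ (N + 1) = (1 - x ^ (N + 1)) * (1 + x ^ (N + 1)) := by ring
      rw [posConfigSum_succ, hfactor]
      field_simp
      ring
    refine ⟨hpos, ?_⟩
    convert! hasSum_config_succ hpos ih.1 using 1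
    rw [posConfigSum_succ]
    field_simp
    ring

end Critical

/-! ### Summation over `He` -/

/-- The sequence with which the elements of `He` eventually agree. -/
def groundState (n : ℕ) : ℕ := if (n + 1) % 2 = 0 then 1 else 0

/-- The elements of `He` that agree with the ground state beyond site `2M`. -/
def HeTrunc (M : ℕ) : Set (ℕ → ℕ) :=
  {ω | ω ∈ He ∧ ∀ n ≥ 2 * M, ω n = groundState n}

lemma monotone_heTrunc : Monotone HeTrunc := fun _ _ hMN _ hω =>
  ⟨hω.1, fun n hn => hω.2 n ((Nat.mul_le_mul_left 2 hMN).trans hn)⟩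

lemma iUnion_heTrunc : ⋃ M, HeTrunc M = He := by
  refine Set.Subset.antisymm (Set.iUnion_subset fun M ω hω => hω.1) fun ω hω => ?_
  obtain ⟨N, hN⟩ := hω.2
  exact Set.mem_iUnion.2 ⟨N, hω, fun n hn => hN n (by lia)⟩

/-- Replacing the zero tail by the ground-state tail. Since the ground state vanishes at site
`2M + 1`, the entry at site `2M` must be positive. -/
def truncEquiv (M : ℕ) : PosConfig (2 * M) ≃ HeTrunc M where
  toFun ω := ⟨fun n => if n < 2 * M then ω.1 n else groundState n, by
    obtain ⟨ω, ⟨hadj, -⟩, hlast⟩ := ω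
    refine ⟨⟨fun n => ?_, 2 * M, fun n hn => if_neg hn.not_gt⟩, fun n hn => if_neg hn.not_gt⟩
    have := hadj n
    have := hlast n
    grind [groundState]⟩
  invFun ω := ⟨fun n => if n < 2 * M then ω.1 n else 0, by
    obtain ⟨ω, ⟨hadj, -⟩, htail⟩ := ω
    refine ⟨⟨fun n _ => ?_, fun n hn => if_neg hn.not_gt⟩, fun n _ => ?_⟩
    · have := hadj n
      grind
    · have := hadj n
      have := htail (n + 1)
      grind [groundState]⟩
  left_inv := by
    rintro ⟨ω, ⟨-, hzero⟩, -⟩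
    ext n
    have := hzero n
    grind
  right_inv := by
    rintro ⟨ω, -, htail⟩
    ext n
    have := htail n
    grind

lemma configWeight_truncEquiv (p s : ℝ) (M : ℕ) (ω : PosConfig (2 * M)) :
    configWeight p s (2 * M) (truncEquiv M ω) = configWeight p s (2 * M) ω :=
  prod_congr rfl fun _ hn => congrArg (siteWeight p s _) (if_pos (mem_range.1 hn))

section EventuallyGround

variable {ω : ℕ → ℕ} {N : ℕ}

lemma afun_eq_sum_range (hω : ∀ n ≥ N, ω n = groundState n) :
    Afun ω = ∑ n ∈ range N, (((n : ℤ) + 1) * ω n - ((n : ℤ) + 1) * groundState n) := by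
  have hterm (n : ℕ) : (if (n + 1) % 2 = 1 then ((n : ℤ) + 1) * (ω n : ℤ)
      else ((n : ℤ) + 1) * ((ω n : ℤ) - 1)) =
        ((n : ℤ) + 1) * ω n - ((n : ℤ) + 1) * groundState n := by
    grind [groundState]
  rw [Afun, finsum_congr hterm]
  refine finsum_eq_sum_of_support_subset _ fun n hn => ?_
  by_contra hnN
  exact hn (sub_eq_zero.2 (by rw [hω n (by simpa using hnN)]))

lemma bfun_eq_sum_range (hω : ∀ n ≥ N, ω n = groundState n) :
    Bfun ω = ∑ n ∈ range N,
      (2 * (if ω n = 0 then 0 else 1) - 2 * (if groundState n = 0 then 0 else 1)) := by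
  have hodd : (∑ᶠ n : ℕ, if (n + 1) % 2 = 1 ∧ 1 ≤ ω n then (1 : ℤ) else 0) =
      ∑ n ∈ range N, if (n + 1) % 2 = 1 ∧ 1 ≤ ω n then (1 : ℤ) else 0 :=
    finsum_eq_sum_of_support_subset _ fun n hn => by
      have := hω n
      grind [groundState, Function.mem_support]
  have heven : (∑ᶠ n : ℕ, if (n + 1) % 2 = 0 ∧ ω n = 0 then (1 : ℤ) else 0) =
      ∑ n ∈ range N, if (n + 1) % 2 = 0 ∧ ω n = 0 then (1 : ℤ) else 0 :=
    finsum_eq_sum_of_support_subset _ fun n hn => by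
      have := hω n
      grind [groundState, Function.mem_support]
  rw [Bfun, hodd, heven, ← sum_sub_distrib, mul_sum]
  refine sum_congr rfl fun n _ => ?_
  grind [groundState]

lemma siteWeight_sq (p t : ℝ) (n k : ℕ) :
    siteWeight p (t ^ 2) n k =
      p ^ (((n : ℤ) + 1) * k) * t ^ (2 * (if k = 0 then 0 else 1) : ℤ) := by
  have hexp : ((n : ℤ) + 1) * k = ((n + 1) * k : ℕ) := by push_cast; rfl
  rw [siteWeight, hexp, zpow_natCast]
  split_ifs
  · rw [mul_zero, zpow_zero]
  · rw [mul_one, zpow_ofNat]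

lemma zpow_afun_mul_zpow_bfun {p t : ℝ} (hp : p ≠ 0) (ht : t ≠ 0)
    (hω : ∀ n ≥ N, ω n = groundState n) :
    p ^ Afun ω * t ^ Bfun ω =
      configWeight p (t ^ 2) N ω / configWeight p (t ^ 2) N groundState := by
  rw [afun_eq_sum_range hω, bfun_eq_sum_range hω, zpow_sum₀ hp, zpow_sum₀ ht, ← prod_mul_distrib,
    configWeight, configWeight, ← prod_div_distrib]
  refine prod_congr rfl fun n _ => ?_
  rw [zpow_sub₀ hp, zpow_sub₀ ht, siteWeight_sq, siteWeight_sq, mul_div_mul_comm]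

end EventuallyGround

section Critical

variable {x t : ℝ}

lemma configWeight_groundState {s : ℝ} (hs : x * s = (1 + x) ^ 2) (M : ℕ) :
    configWeight (x ^ 2) s (2 * M) groundState = ∏ i ∈ range (2 * M), (1 + x) * x ^ (i + 1) := by
  induction M with
  | zero => rfl
  | succ M ih =>
    have hground : groundState (2 * M) = 0 := if_neg (by lia)
    have hground' : groundState (2 * M + 1) = 1 := if_pos (by lia)
    rw [configWeight] at ih ⊢
    rw [Nat.mul_succ, prod_range_succ, prod_range_succ, prod_range_succ, prod_range_succ, ih,
      hground, hground', siteWeight, siteWeight, if_pos rfl, if_neg one_ne_zero]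
    linear_combination (∏ i ∈ range (2 * M), (1 + x) * x ^ (i + 1)) * x ^ (4 * M + 3) * hs

lemma hasSum_heTrunc (hx0 : 0 < x) (hx1 : x < 1) (ht : x * t ^ 2 = (1 + x) ^ 2) (M : ℕ) :
    HasSum (fun ω : HeTrunc M => (x ^ 2) ^ Afun ω * t ^ Bfun ω) (qPochhammer x (2 * M))⁻¹ := by
  have ht0 : t ≠ 0 := by
    rintro rfl
    nlinarith
  have hground : ∏ i ∈ range (2 * M), (1 + x) * x ^ (i + 1) ≠ 0 := by positivity
  have hsum := (hasSum_posConfig_and_config hx0 hx1 ht (2 * M)).1.div_const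
    (configWeight (x ^ 2) (t ^ 2) (2 * M) groundState)
  rw [configWeight_groundState ht, posConfigSum, div_div_cancel_left' hground] at hsum
  rw [← (truncEquiv M).hasSum_iff]
  refine hsum.congr_fun fun ω => ?_
  rw [Function.comp_apply, zpow_afun_mul_zpow_bfun (by positivity) ht0 (truncEquiv M ω).2.2,
    configWeight_truncEquiv, configWeight_groundState ht]

lemma seven_sq_eq_inv_qPochhammerInf (hx0 : 0 < x) (hx1 : x < 1) (ht : x * t ^ 2 = (1 + x) ^ 2) :
    Seven (x ^ 2) t = (qPochhammerInf x)⁻¹ := by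
  have hnonneg (ω : ℕ → ℕ) : 0 ≤ (x ^ 2) ^ Afun ω * t ^ Bfun ω :=
    mul_nonneg (by positivity) ((even_two_mul _).zpow_nonneg t)
  have hlim : Tendsto (fun M => (qPochhammer x (2 * M))⁻¹) atTop (𝓝 (qPochhammerInf x)⁻¹) :=
    (tendsto_inv_qPochhammer (by rwa [Real.norm_of_nonneg hx0.le])).comp
      (tendsto_id.const_mul_atTop' two_pos)
  have hsum := hasSum_iUnion_of_monotone hnonneg monotone_heTrunc (hasSum_heTrunc hx0 hx1 ht) hlim
  rw [iUnion_heTrunc] at hsum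
  exact hsum.tsum_eq

end Critical

lemma seven_pow_four {q : ℝ} (hq0 : q ≠ 0) (hq1 : |q| < 1) :
    Seven (q ^ 4) (q + q⁻¹) = (qPochhammerInf (q ^ 2))⁻¹ := by
  rw [pow_mul q 2 2]
  refine seven_sq_eq_inv_qPochhammerInf (by positivity) ((sq_lt_one_iff_abs_lt_one q).2 hq1) ?_
  field_simp
  ring

theorem statement3_general {𝕜 : Type*} [RCLike 𝕜] (q : ℝ) (z : 𝕜) (hq0 : q ≠ 0) (hq1 : |q| < 1)
    (hz : z ≠ 0) :
    Summable (fun ℓ : ℤ => (q : 𝕜) ^ ((2 * ℓ + 1) ^ 2) * z ^ (2 * ℓ + 1)) ∧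
    Multipliable (fun i : ℕ =>
      (1 + (q : 𝕜) ^ (2 * i + 1) * z) * (1 + (q : 𝕜) ^ (2 * i + 1) * z⁻¹)) ∧
    Multipliable (fun i : ℕ =>
      (1 - (q : 𝕜) ^ (2 * i + 1) * z) * (1 - (q : 𝕜) ^ (2 * i + 1) * z⁻¹)) ∧
    2 * (Seven (q ^ 4) (q + q⁻¹) : 𝕜) *
        (∑' ℓ : ℤ, (q : 𝕜) ^ ((2 * ℓ + 1) ^ 2) * z ^ (2 * ℓ + 1)) =
      (∏' i : ℕ, (1 + (q : 𝕜) ^ (2 * i + 1) * z) * (1 + (q : 𝕜) ^ (2 * i + 1) * z⁻¹)) -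
      (∏' i : ℕ, (1 - (q : 𝕜) ^ (2 * i + 1) * z) * (1 - (q : 𝕜) ^ (2 * i + 1) * z⁻¹)) := by
  have hq0' : (q : 𝕜) ≠ 0 := RCLike.ofReal_ne_zero.2 hq0
  have hq1' : ‖(q : 𝕜)‖ < 1 := by rwa [RCLike.norm_ofReal]
  refine ⟨(summable_norm_thetaTerm hq0' hq1' hz).of_norm.comp_injective injective_two_mul_add_one,
    multipliable_tripleProduct hq1' z, multipliable_tripleProduct_sub hq1' z, ?_⟩
  have hP : qPochhammerInf ((q : 𝕜) ^ 2) ≠ 0 := qPochhammerInf_ne_zero (norm_sq_lt_one hq1')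
  rw [seven_pow_four hq0 hq1, RCLike.ofReal_inv, ← qPochhammerInf_ofReal (norm_sq_lt_one hq1),
    RCLike.ofReal_pow, mul_right_comm, mul_inv_eq_iff_eq_mul₀ hP, mul_comm _ (qPochhammerInf _),
    qPochhammerInf_mul_tprod_sub_tprod hq0' hq1' hz]
  rfl

theorem statement3 (q z : ℝ) (hq0 : 0 < q) (hq1 : q < 1) (hz : 0 < z) :
    Summable (fun ℓ : ℤ => q ^ ((2 * ℓ + 1) ^ 2) * z ^ (2 * ℓ + 1)) ∧
    Multipliable (fun i : ℕ => (1 + q ^ (2 * i + 1) * z) * (1 + q ^ (2 * i + 1) * z⁻¹)) ∧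
    Multipliable (fun i : ℕ => (1 - q ^ (2 * i + 1) * z) * (1 - q ^ (2 * i + 1) * z⁻¹)) ∧
    2 * Seven (q ^ 4) (q + q⁻¹) * (∑' ℓ : ℤ, q ^ ((2 * ℓ + 1) ^ 2) * z ^ (2 * ℓ + 1)) =
      (∏' i : ℕ, (1 + q ^ (2 * i + 1) * z) * (1 + q ^ (2 * i + 1) * z⁻¹)) -
      (∏' i : ℕ, (1 - q ^ (2 * i + 1) * z) * (1 - q ^ (2 * i + 1) * z⁻¹)) := by
  simpa only [RCLike.ofReal_real_eq_id, id] using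
    statement3_general (𝕜 := ℝ) q z hq0.ne' (by rwa [abs_of_pos hq0]) hz.ne'
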